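/- For every derivable context judgement ⊢ Γ in GSeTT, the judgement ⊢ ⟦Γ⟧_B is derivable in HoTT (Lemma 4.1, context part). -/

import Mathlib

/-! ### Deep embedding of the fragment of Martin-Löf type theory ("HoTT") -/

/-- HoTT variable names: `Sum.inl n` is the image of CaTT/GSeTT variable `n`,
`Sum.inr k` are extra HoTT-only names. -/
abbrev HVar : Type := ℕ ⊕ ℕ

/-- The fixed variable `B`, not the name of any CaTT/GSeTT variable. -/
def Bv : HVar := Sum.inr 0

mutual
/-- Pre-terms of HoTT. `J A u x y e P p` is the Paulin-Mohring eliminator with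
base point `u : A`, motive `P` (with bound variables `x y e`) and base case `p`. -/
inductive HTm : Type
  | var : HVar → HTm
  | refl : HTy → HTm → HTm
  | J : HTy → HTm → HVar → HVar → HVar → HTy → HTm → HTm
  | app : HTm → HTm → HTm
  | lam : HVar → HTy → HTm → HTm

/-- Pre-types of HoTT: the Tarski universe `univ`, `el`, identity types and Π-types. -/
inductive HTy : Type
  | univ : HTy
  | el : HTm → HTy
  | id : HTy → HTm → HTm → HTy
  | pi : HVar → HTy → HTy → HTy
end

/-- Pre-substitutions of HoTT (head = most recent binding). -/
abbrev HSubst := List (HVar × HTm)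
/-- Pre-contexts of HoTT (head = most recent declaration). -/
abbrev HCtx := List (HVar × HTy)

def hlookup : HSubst → HVar → HTm
  | [], x => .var x
  | (y, t) :: γ, x => if y = x then t else hlookup γ x

/-- Remove the bindings of a bound variable from a substitution. -/
def hdrop (γ : HSubst) (x : HVar) : HSubst := γ.filter (fun q => q.1 ≠ x)

mutual
/-- Action of substitutions on HoTT pre-terms. -/
def hsubTm : HTm → HSubst → HTm
  | .var x, γ => hlookup γ x
  | .refl A u, γ => .refl (hsubTy A γ) (hsubTm u γ)
  | .J A u x y e P p, γ =>
      .J (hsubTy A γ) (hsubTm u γ) x y e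
        (hsubTy P (hdrop (hdrop (hdrop γ x) y) e)) (hsubTm p γ)
  | .app f u, γ => .app (hsubTm f γ) (hsubTm u γ)
  | .lam x A u, γ => .lam x (hsubTy A γ) (hsubTm u (hdrop γ x))
/-- Action of substitutions on HoTT pre-types. -/
def hsubTy : HTy → HSubst → HTy
  | .univ, _ => .univ
  | .el a, γ => .el (hsubTm a γ)
  | .id A u v, γ => .id (hsubTy A γ) (hsubTm u γ) (hsubTm v γ)
  | .pi x A B, γ => .pi x (hsubTy A γ) (hsubTy B (hdrop γ x))
end

/-- Composition of HoTT substitutions. -/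
def hcomp (δ γ : HSubst) : HSubst := δ.map (fun p => (p.1, hsubTm p.2 γ))

/-- The identity substitution of a context. -/
def hid (Γ : HCtx) : HSubst := Γ.map (fun p => (p.1, HTm.var p.1))

def hassoc : HCtx → HVar → Option HTy
  | [], _ => none
  | (y, A) :: Γ, x => if y = x then some A else hassoc Γ x

mutual
/-- Definitional equality of HoTT pre-terms, generated by the computation rule
`J(A,u,P,p) v refl ≡ p` together with congruence rules. -/
inductive HTmEq : HTm → HTm → Prop
  | jbeta (A : HTy) (u : HTm) (x y e : HVar) (P : HTy) (p v : HTm) (B : HTy) (w : HTm) :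
      HTmEq (.app (.app (.J A u x y e P p) v) (.refl B w)) p
  | refl (u : HTm) : HTmEq u u
  | symm : HTmEq u v → HTmEq v u
  | trans : HTmEq u v → HTmEq v w → HTmEq u w
  | reflCong : HTyEq A A' → HTmEq u u' → HTmEq (.refl A u) (.refl A' u')
  | JCong : HTyEq A A' → HTmEq u u' → HTyEq P P' → HTmEq p p' →
      HTmEq (.J A u x y e P p) (.J A' u' x y e P' p')
  | appCong : HTmEq f f' → HTmEq u u' → HTmEq (.app f u) (.app f' u')
  | lamCong : HTyEq A A' → HTmEq u u' → HTmEq (.lam x A u) (.lam x A' u')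

/-- Definitional equality of HoTT pre-types. -/
inductive HTyEq : HTy → HTy → Prop
  | refl (A : HTy) : HTyEq A A
  | symm : HTyEq A B → HTyEq B A
  | trans : HTyEq A B → HTyEq B C → HTyEq A C
  | elCong : HTmEq a a' → HTyEq (.el a) (.el a')
  | idCong : HTyEq A A' → HTmEq u u' → HTmEq v v' → HTyEq (.id A u v) (.id A' u' v')
  | piCong : HTyEq A A' → HTyEq B B' → HTyEq (.pi x A B) (.pi x A' B')
end

mutual
/-- Validity of HoTT contexts: `⊢ Γ`. -/
inductive HCtxJ : HCtx → Prop
  | nil : HCtxJ []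
  | cons : HCtxJ Γ → HTyJ Γ A → HCtxJ ((x, A) :: Γ)

/-- Validity of HoTT types: `Γ ⊢ A`. -/
inductive HTyJ : HCtx → HTy → Prop
  | univ : HCtxJ Γ → HTyJ Γ .univ
  | el : HTmJ Γ a .univ → HTyJ Γ (.el a)
  | id : HTmJ Γ u A → HTmJ Γ v A → HTyJ Γ (.id A u v)
  | pi : HTyJ Γ A → HTyJ ((x, A) :: Γ) B → HTyJ Γ (.pi x A B)
  | conv : HTyJ Γ A → HTyEq A B → HTyJ Γ B

/-- Typing of HoTT terms: `Γ ⊢ u : A`. -/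
inductive HTmJ : HCtx → HTm → HTy → Prop
  | var : HCtxJ Γ → hassoc Γ x = some A → HTmJ Γ (.var x) A
  | refl : HTmJ Γ u A → HTmJ Γ (.refl A u) (.id A u u)
  | lam : HTyJ Γ A → HTmJ ((x, A) :: Γ) u B → HTmJ Γ (.lam x A u) (.pi x A B)
  | app : HTmJ Γ f (.pi x A B) → HTmJ Γ u A → HTmJ Γ (.app f u) (hsubTy B [(x, u)])
  | J : HTyJ Γ A → HTmJ Γ u A →
      HTyJ ((e, .id A (.var x) (.var y)) :: (y, A) :: (x, A) :: Γ) P →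
      HTmJ Γ p (hsubTy P [(x, u), (y, u), (e, .refl A u)]) →
      HTmJ Γ (.J A u x y e P p)
        (.pi y A (.pi e (.id A u (.var y)) (hsubTy P [(x, u)])))
  | conv : HTmJ Γ u A → HTyEq A B → HTmJ Γ u B
  | convTm : HTmJ Γ u A → HTmEq u v → HTmJ Γ v A

/-- Typing of HoTT substitutions: `Δ ⊢ γ : Γ`. -/
inductive HSubJ : HCtx → HSubst → HCtx → Prop
  | nil : HCtxJ Δ → HSubJ Δ [] []
  | cons : HSubJ Δ γ Γ → HTyJ Γ A → HTmJ Δ t (hsubTy A γ) →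
      HSubJ Δ ((x, t) :: γ) ((x, A) :: Γ)
end

mutual
/-- Iterated identity types `Idⁿ_A(u)`. -/
def idN : ℕ → HTy → HTm → HTy
  | 0, A, _ => A
  | n+1, A, u => .id (idN n A u) (reflN n A u) (reflN n A u)
/-- Iterated reflexivities `reflⁿ_{A,u}`. -/
def reflN : ℕ → HTy → HTm → HTm
  | 0, _, u => u
  | n+1, A, u => .refl (idN n A u) (reflN n A u)
end

/-- Π-lifting `Π_Γ.A`: successively bind all variables of `Γ`. -/
def piLift : HCtx → HTy → HTy
  | [], A => A
  | (x, T) :: Γ, A => piLift Γ (.pi x T A)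

/-- λ-lifting `λ_Γ.u`: successively bind all variables of `Γ`. -/
def lamLift : HCtx → HTm → HTm
  | [], u => u
  | (x, T) :: Γ, u => lamLift Γ (.lam x T u)

/-! ### The dependent type theory GSeTT -/

/-- Pre-types of GSeTT: `⋆` and `u →_A v` (terms of GSeTT are variables, i.e. `ℕ`). -/
inductive GTy : Type
  | obj : GTy
  | arr : GTy → ℕ → ℕ → GTy
deriving DecidableEq

/-- Pre-contexts of GSeTT (head = most recent declaration). -/
abbrev GCtx := List (ℕ × GTy)

def gassoc : GCtx → ℕ → Option GTy
  | [], _ => none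
  | (y, A) :: Γ, x => if y = x then some A else gassoc Γ x

mutual
/-- `⊢ Γ` in GSeTT. -/
inductive GCtxJ : GCtx → Prop
  | nil : GCtxJ []
  | cons : GCtxJ Γ → GTyJ Γ A → GCtxJ ((x, A) :: Γ)
/-- `Γ ⊢ A` in GSeTT. -/
inductive GTyJ : GCtx → GTy → Prop
  | obj : GCtxJ Γ → GTyJ Γ .obj
  | arr : GTmJ Γ u A → GTmJ Γ v A → GTyJ Γ (.arr A u v)
/-- `Γ ⊢ x : A` in GSeTT (terms are variables). -/
inductive GTmJ : GCtx → ℕ → GTy → Prop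
  | var : GCtxJ Γ → gassoc Γ x = some A → GTmJ Γ x A
end

/-- The variables declared in a GSeTT context. -/
def gvars (Γ : GCtx) : List ℕ := Γ.map Prod.fst

/-- The auxiliary judgement `Γ ⊢_ps x : A` recognising ps-contexts;
all declared variables are required to be pairwise distinct. -/
inductive GPsAux : GCtx → ℕ → GTy → Prop
  | pss (x : ℕ) : GPsAux [(x, .obj)] x .obj
  | pse : GPsAux Γ x A → y ∉ gvars Γ → f ∉ gvars Γ → f ≠ y →
      GPsAux ((f, .arr A x y) :: (y, A) :: Γ) f (.arr A x y)
  | psd : GPsAux Γ f (.arr A x y) → GPsAux Γ y A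

/-- The judgement `Γ ⊢_ps` recognising ps-contexts. -/
inductive GPs : GCtx → Prop
  | ps : GPsAux Γ x .obj → GPs Γ

/-- Dimension of a GSeTT type: `dim ⋆ = -1`, `dim (u →_A v) = dim A + 1`. -/
def gdim : GTy → ℤ
  | .obj => -1
  | .arr A _ _ => gdim A + 1

/-- Dimension of a GSeTT context: the maximal dimension of the types of its variables. -/
def gdimCtx (Γ : GCtx) : ℤ := (Γ.map (fun p => gdim p.2)).foldr max (-1)

/-- The `i`-source `∂ᵢ⁻Γ` of a ps-context. -/
def gsrc (i : ℤ) : GCtx → GCtx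
  | (f, F) :: (y, A) :: Δ =>
      if gdim A + 1 ≥ i then gsrc i Δ else (f, F) :: (y, A) :: gsrc i Δ
  | Γ => Γ

/-- The `i`-target `∂ᵢ⁺Γ` of a ps-context. -/
def gtgt (i : ℤ) : GCtx → GCtx
  | (f, F) :: (y, A) :: Δ =>
      if gdim A + 1 > i then gtgt i Δ
      else if gdim A + 1 = i then (y, A) :: (gtgt i Δ).tail
      else (f, F) :: (y, A) :: gtgt i Δ
  | Γ => Γ

/-- Translation of GSeTT types into HoTT. -/
def ginterpTy : GTy → HTy
  | .obj => .el (.var Bv)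
  | .arr A x y => .id (ginterpTy A) (.var (Sum.inl x)) (.var (Sum.inl y))

/-- Translation of GSeTT contexts into HoTT contexts (`⟦∅⟧_B = (B : Type)`). -/
def ginterpCtx : GCtx → HCtx
  | [] => [(Bv, .univ)]
  | (x, A) :: Γ => (Sum.inl x, ginterpTy A) :: ginterpCtx Γ


theorem hassoc_Bv (Γ : GCtx) : hassoc (ginterpCtx Γ) Bv = some .univ := by
  induction Γ with
  | nil => simp [ginterpCtx, hassoc]
  | cons p Γ ih => obtain ⟨x, A⟩ := p; simpa [ginterpCtx, hassoc, Bv] using ih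

theorem hassoc_inl (Γ : GCtx) (x : ℕ) (A : GTy) (h : gassoc Γ x = some A) :
    hassoc (ginterpCtx Γ) (Sum.inl x) = some (ginterpTy A) := by
  induction Γ with
  | nil => simp [gassoc] at h
  | cons p Γ ih =>
    obtain ⟨y, C⟩ := p
    by_cases hy : y = x
    · simp [gassoc, hy] at h
      simp [ginterpCtx, hassoc, hy, h]
    · simp [gassoc, hy] at h
      simpa [ginterpCtx, hassoc, hy] using ih h

/-- Lemma 4.1, context part. -/
theorem stmt7 (Γ : GCtx) (h : GCtxJ Γ) : HCtxJ (ginterpCtx Γ) := by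
  induction Γ with
  | nil => exact .cons .nil (.univ .nil)
  | cons p Γ ih =>
    cases h with
    | cons hΓ hA =>
      have hc := ih hΓ
      refine .cons hc ?_
      cases hA with
      | obj _ => exact .el (.var hc (hassoc_Bv Γ))
      | arr hu hv =>
        cases hu with
        | var _ hu =>
          cases hv with
          | var _ hv =>
            exact .id (.var hc (hassoc_inl _ _ _ hu)) (.var hc (hassoc_inl _ _ _ hv))
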